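/- arXiv:math/0309189 — 5 statements merged into one kernel-verified Lean document; each statement's English description precedes it below -/
import Mathlib

section
/- Let R be a commutative ring, let t ≥ 1 and c ≥ 1 be integers, and let a = (a_{i,j}) be a t×(t+c−1) matrix of integers whose entries satisfy the monotonicity convention a_{i,j} ≤ a_{k,l} whenever i ≥ k and j ≤ l. Let F = (F_{i,j}) be a t×(t+c−1) matrix with entries in R such that F_{i,j} = 0 whenever a_{i,j} ≤ 0. If a_{h,h} ≤ 0 for some h with 1 ≤ h ≤ t, then for every strictly increasing choice of t column indices j_1 < j_2 < … < j_t with j_i = i for all i = 1,…,h, the determinant of the t×t submatrix of F on these columns is zero. In particular, when c = 2 the maximal minor of F obtained by deleting any column j with j > h vanishes. -/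
/-!
By monotonicity `a h h ≤ 0` forces `F i j = 0` for all `i ≥ h` and `j ≤ h`. In the chosen
submatrix these zeros fill `t - h + 1` rows and `h` columns (counting `h` from `1`), and a square
matrix of size `t` with a zero block of more than `t` rows and columns in total is singular.
-/

section ZeroBlock

variable {m : Type*} [Fintype m]

theorem exists_mem_perm_apply_mem_of_card_lt_card_add_card {rows cols : Finset m}
    (hcard : Fintype.card m < rows.card + cols.card) (σ : Equiv.Perm m) :
    ∃ k ∈ cols, σ k ∈ rows := by
  classical
  have hcard' : (Finset.univ : Finset m).card < rows.card + (cols.map σ.toEmbedding).card := by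
    rwa [Finset.card_univ, Finset.card_map]
  obtain ⟨i, hi⟩ := Finset.inter_nonempty_of_card_lt_card_add_card
    (Finset.subset_univ _) (Finset.subset_univ _) hcard'
  obtain ⟨hrow, hcol⟩ := Finset.mem_inter.mp hi
  obtain ⟨k, hk, rfl⟩ := Finset.mem_map.mp hcol
  exact ⟨k, hk, hrow⟩

variable {R : Type*} [DecidableEq m] [CommRing R]

theorem det_eq_zero_of_forall_perm_exists_eq_zero {A : Matrix m m R}
    (hA : ∀ σ : Equiv.Perm m, ∃ k, A (σ k) k = 0) : A.det = 0 := by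
  rw [Matrix.det_apply]
  refine Finset.sum_eq_zero fun σ _ => ?_
  obtain ⟨k, hk⟩ := hA σ
  have hprod : ∏ i, A (σ i) i = 0 := Finset.prod_eq_zero (Finset.mem_univ k) hk
  rw [hprod, smul_zero]

/-- The easy half of the Frobenius–König theorem. -/
theorem det_eq_zero_of_zero_block {A : Matrix m m R} {rows cols : Finset m}
    (hcard : Fintype.card m < rows.card + cols.card)
    (hzero : ∀ i ∈ rows, ∀ k ∈ cols, A i k = 0) : A.det = 0 :=
  det_eq_zero_of_forall_perm_exists_eq_zero fun σ =>
    let ⟨k, hk, hσk⟩ := exists_mem_perm_apply_mem_of_card_lt_card_add_card hcard σ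
    ⟨k, hzero (σ k) hσk k hk⟩

end ZeroBlock

section LinearOrder

variable {m : Type*} [Fintype m] [LinearOrder m]

open Finset in
theorem card_lt_card_filter_ge_add_card_filter_le (h : m) :
    Fintype.card m < #{i | h ≤ i} + #{k | k ≤ h} := by
  have hunion : univ.filter (h ≤ ·) ∪ univ.filter (· ≤ h) = univ := by
    ext i
    simpa using le_total h i
  have hinter : (univ.filter (h ≤ ·) ∩ univ.filter (· ≤ h)).Nonempty := ⟨h, by simp⟩
  rw [← card_union_add_card_inter, hunion, card_univ]
  exact Nat.lt_add_of_pos_right hinter.card_pos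

theorem stmt_1_general {n α R : Type*} [Preorder n] [Preorder α] [Zero α] [CommRing R]
    {a : m → n → α} (hmono : ∀ i k j l, k ≤ i → j ≤ l → a i j ≤ a k l)
    {F : Matrix m n R} (hF : ∀ i j, a i j ≤ 0 → F i j = 0)
    {h : m} {j : n} (hj : a h j ≤ 0)
    {cols : m → n} (hcols : ∀ k ≤ h, cols k ≤ j) :
    (F.submatrix id cols).det = 0 := by
  refine det_eq_zero_of_zero_block (card_lt_card_filter_ge_add_card_filter_le h)
    fun i hi k hk => hF i (cols k) ?_
  have hhi : h ≤ i := (Finset.mem_filter.mp hi).2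
  have hkh : k ≤ h := (Finset.mem_filter.mp hk).2
  exact (hmono i h (cols k) j hhi (hcols k hkh)).trans hj

end LinearOrder

/-- Let `a` be a `t × (t + c - 1)` integer matrix whose entries decrease from
right to left and from top to bottom, and let `F` be a matrix over a commutative
ring `R` with `F i j = 0` whenever `a i j ≤ 0`.  If some diagonal entry
`a h h ≤ 0`, then for every strictly increasing choice of `t` column indices
`cols` with `cols i = i` for all `i ≤ h`, the determinant of the corresponding
`t × t` submatrix of `F` vanishes. -/
theorem stmt_1 {R : Type*} [CommRing R] (t c : ℕ) (ht : 1 ≤ t) (hc : 1 ≤ c)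
    (a : Fin t → Fin (t + c - 1) → ℤ)
    (hmono : ∀ (i k : Fin t) (j l : Fin (t + c - 1)), k ≤ i → j ≤ l → a i j ≤ a k l)
    (F : Fin t → Fin (t + c - 1) → R)
    (hF : ∀ i j, a i j ≤ 0 → F i j = 0)
    (h : Fin t) (hdiag : a h (Fin.castLE (by omega) h) ≤ 0)
    (cols : Fin t → Fin (t + c - 1)) (hcols : StrictMono cols)
    (hfix : ∀ i : Fin t, i ≤ h → (cols i : ℕ) = (i : ℕ)) :
    Matrix.det (Matrix.of fun i k : Fin t => F i (cols k)) = 0 :=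
  stmt_1_general hmono hF hdiag fun k hk => (hfix k hk).trans_le hk
end

section
/- Fix an integer t ≥ 1 and integers a_1,…,a_t ≥ 1 and b_1,…,b_t ≥ 1. Set S = a_1 + ⋯ + a_t, p_i = a_1 + ⋯ + a_{i−1}, q_i = a_{i+1} + ⋯ + a_t + b_i, and let h(z) = Σ_{i=1}^{t} z^{p_i} · (1 + z + ⋯ + z^{a_i − 1}) · (1 + z + ⋯ + z^{q_i − 1}) ∈ ℤ[z]. Then 1 − z^S − Σ_{i=1}^{t} z^{S − a_i + b_i} + Σ_{i=1}^{t} z^{S + b_i} = (1 − z)^2 · h(z). -/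
open Polynomial Finset

/-!
Multiplying the two geometric sums of the `i`-th summand of `h` by `(1 - z)²` gives
`z ^ pᵢ * (1 - z ^ aᵢ) * (1 - z ^ qᵢ)`. Since `pᵢ + qᵢ = S - aᵢ + bᵢ` and `pᵢ + aᵢ + qᵢ = S + bᵢ`,
expanding the last factor leaves `z ^ pᵢ - z ^ (pᵢ + aᵢ)`, which telescopes to `1 - z ^ S`.
-/

section FiniteLinearOrder

variable {ι : Type*} [LinearOrder ι] [Fintype ι] [LocallyFiniteOrderBot ι]

theorem sum_Iio_add_add_sum_Ioi {M : Type*} [AddCommMonoid M] [LocallyFiniteOrderTop ι]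
    (f : ι → M) (i : ι) :
    ∑ k ∈ Iio i, f k + f i + ∑ k ∈ Ioi i, f k = ∑ k, f k := by
  rw [Fintype.sum_eq_add_sum_compl i f, ← Ioi_disjUnion_Iio, sum_disjUnion]
  ac_rfl

theorem sum_prod_Iio_mul_one_sub {R : Type*} [CommRing R] (f : ι → R) :
    ∑ i, (∏ k ∈ Iio i, f k) * (1 - f i) = 1 - ∏ i, f i := by
  have h := prod_one_sub_ordered univ fun i ↦ 1 - f i
  simp only [sub_sub_cancel, filter_gt_eq_Iio] at h
  simp only [h, sub_sub_cancel, mul_comm]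

end FiniteLinearOrder

theorem one_sub_sq_mul_pow_mul_geom_sum_mul_geom_sum {R : Type*} [CommRing R] (x : R)
    (p m n : ℕ) :
    (1 - x) ^ 2 * (x ^ p * (∑ k ∈ range m, x ^ k) * ∑ k ∈ range n, x ^ k) =
      x ^ p * (1 - x ^ m) - x ^ (p + n) + x ^ (p + m + n) := by
  calc (1 - x) ^ 2 * (x ^ p * (∑ k ∈ range m, x ^ k) * ∑ k ∈ range n, x ^ k)
      = x ^ p * ((1 - x) * ∑ k ∈ range m, x ^ k) * ((1 - x) * ∑ k ∈ range n, x ^ k) := by ring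
    _ = x ^ p * (1 - x ^ m) * (1 - x ^ n) := by rw [mul_neg_geom_sum, mul_neg_geom_sum]
    _ = x ^ p * (1 - x ^ m) - x ^ (p + n) + x ^ (p + m + n) := by ring

theorem stmt_3_general {R ι : Type*} [CommRing R] [LinearOrder ι] [Fintype ι]
    [LocallyFiniteOrderBot ι] [LocallyFiniteOrderTop ι] (x : R) (a b : ι → ℕ) :
    1 - x ^ (∑ k, a k) - ∑ i, x ^ (∑ k, a k - a i + b i) + ∑ i, x ^ (∑ k, a k + b i) =
      (1 - x) ^ 2 * ∑ i, x ^ (∑ k ∈ Iio i, a k) * (∑ k ∈ range (a i), x ^ k) *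
        ∑ k ∈ range (∑ k ∈ Ioi i, a k + b i), x ^ k := by
  have telescope : 1 - x ^ (∑ k, a k) = ∑ i, x ^ (∑ k ∈ Iio i, a k) * (1 - x ^ a i) := by
    simpa only [prod_pow_eq_pow_sum] using (sum_prod_Iio_mul_one_sub fun i ↦ x ^ a i).symm
  rw [telescope, ← sum_sub_distrib, ← sum_add_distrib, mul_sum]
  refine sum_congr rfl fun i _ ↦ ?_
  have sum_split := sum_Iio_add_add_sum_Ioi a i
  have sub_exponent : ∑ k, a k - a i + b i = ∑ k ∈ Iio i, a k + (∑ k ∈ Ioi i, a k + b i) := by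
    lia
  have add_exponent : ∑ k, a k + b i = ∑ k ∈ Iio i, a k + a i + (∑ k ∈ Ioi i, a k + b i) := by
    lia
  rw [sub_exponent, add_exponent, one_sub_sq_mul_pow_mul_geom_sum_mul_geom_sum]

/-- The polynomial identity underlying Lemma `mat-hvect`:
`1 - z^S - ∑ᵢ z^(S-aᵢ+bᵢ) + ∑ᵢ z^(S+bᵢ) = (1-z)² · h(z)` in `ℤ[z]`, where
`S = a₁ + ⋯ + a_t`, `pᵢ = a₁ + ⋯ + a_{i-1}`, `qᵢ = a_{i+1} + ⋯ + a_t + bᵢ`, and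
`h(z) = ∑ᵢ z^(pᵢ) (1 + z + ⋯ + z^(aᵢ-1)) (1 + z + ⋯ + z^(qᵢ-1))`. -/
theorem stmt_3 (t : ℕ) (ht : 1 ≤ t) (a b : Fin t → ℕ)
    (ha : ∀ i, 1 ≤ a i) (hb : ∀ i, 1 ≤ b i)
    (S : ℕ) (hS : S = ∑ i, a i)
    (p q : Fin t → ℕ)
    (hp : ∀ i, p i = ∑ k ∈ Finset.Iio i, a k)
    (hq : ∀ i, q i = (∑ k ∈ Finset.Ioi i, a k) + b i)
    (h : Polynomial ℤ)
    (hh : h = ∑ i, X ^ (p i) * (∑ k ∈ Finset.range (a i), X ^ k) *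
      (∑ k ∈ Finset.range (q i), X ^ k)) :
    1 - X ^ S - ∑ i, X ^ (S - a i + b i) + ∑ i, X ^ (S + b i) = (1 - X) ^ 2 * h := by
  simpa only [hh, hS, hp, hq] using stmt_3_general X a b
end

section
/- Fix an integer t ≥ 1 and integers a_1,…,a_t ≥ 1 and b_1,…,b_t ≥ 1 satisfying: b_i ≥ a_i for all i, b_{i+1} ≤ b_i and b_{i+1} − a_{i+1} ≤ b_i − a_i for 1 ≤ i ≤ t−1, and a_i + b_{i+1} − b_i ≥ 1 for 1 ≤ i ≤ t−1. Set S = a_1 + ⋯ + a_t, p_i = a_1 + ⋯ + a_{i−1}, q_i = a_{i+1} + ⋯ + a_t + b_i, and let h(z) = Σ_{i=1}^{t} z^{p_i} · (1 + z + ⋯ + z^{a_i − 1}) · (1 + z + ⋯ + z^{q_i − 1}) ∈ ℤ[z], with coefficients h_k. Then the coefficient sequence of h is of decreasing type: for every k ≥ 0 with k + 2 ≤ deg h, if h_k > h_{k+1} then h_{k+1} > h_{k+2}. -/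
open Polynomial Finset

/-!
Let `S = ∑ aᵢ`. Since `pᵢ + aᵢ + qᵢ = S + bᵢ` and the blocks `[pᵢ, pᵢ + aᵢ)` tile `[0, S)`,
multiplying `h` by `1 - X` gives
`(1 - X) h = ∑_{k < S} X ^ k - ∑ᵢ ∑_{S + bᵢ - aᵢ ≤ k < S + bᵢ} X ^ k`.
Hence `h_m - h_{m-1}` is `[m < S]` minus the number of intervals `[S + bᵢ - aᵢ, S + bᵢ)` containing
`m`; suppose that it is negative. If `m + 1 < S`, the next difference is at most as large, because
no interval ends before `S`. Otherwise it suffices that `m + 1` lies in some interval. Some interval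
contains `m`, and consecutive intervals leave no gap, so the only alternative is that `m + 1` is
beyond all of them, and then also beyond the degree of `h`.
-/

section Order

variable {ι α : Type*} [LinearOrder ι] [WellFoundedLT ι] [IsStronglyCoatomic ι] [LinearOrder α]

theorem exists_mem_Ico_of_forall_covBy_lt {c d : ι → α} (hd : Antitone d)
    (hcd : ∀ i j, i ⋖ j → c i < d j) {x : α} {i l : ι} (hi : c i ≤ x) (hl : x < d l) :
    ∃ j, x ∈ Set.Ico (c j) (d j) := by
  obtain ⟨j, hj : c j ≤ x, hmin⟩ := wellFounded_lt.has_min {j | c j ≤ x} ⟨i, hi⟩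
  refine ⟨j, hj, not_le.mp fun hdj => ?_⟩
  have hlj : l < j := hd.reflect_lt (hdj.trans_lt hl)
  obtain ⟨j', -, hcov⟩ := exists_le_covBy_of_lt hlj
  exact hmin j' ((hcd j' j hcov).le.trans hdj) hcov.lt

end Order

section BigOperators

theorem sum_sum_range_add_eq_sum_range_sum {ι M : Type*} [LinearOrder ι] [AddCommMonoid M]
    (s : Finset ι) (a : ι → ℕ) (f : ℕ → M) :
    ∑ i ∈ s, ∑ k ∈ range (a i), f (∑ j ∈ s with j < i, a j + k) =
      ∑ k ∈ range (∑ i ∈ s, a i), f k := by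
  induction s using Finset.induction_on_max with
  | empty => simp
  | insert m s hm ih =>
    have hms : m ∉ s := fun h => (hm m h).false
    have below_max : {j ∈ insert m s | j < m} = s := by
      rw [filter_insert, if_neg (lt_irrefl m), filter_true_of_mem hm]
    have below_mem {i : ι} (hi : i ∈ s) : {j ∈ insert m s | j < i} = {j ∈ s | j < i} := by
      rw [filter_insert, if_neg (hm i hi).not_gt]
    rw [sum_insert hms, sum_insert hms, below_max, add_comm (a m), sum_range_add, ← ih, add_comm]
    congr 1
    exact sum_congr rfl fun i hi => by rw [below_mem hi]

theorem sum_Iio_add_self_add_sum_Ioi {ι M : Type*} [LinearOrder ι] [Fintype ι]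
    [LocallyFiniteOrderBot ι] [LocallyFiniteOrderTop ι] [AddCommMonoid M] (a : ι → M) (i : ι) :
    ∑ k ∈ Iio i, a k + a i + ∑ k ∈ Ioi i, a k = ∑ k, a k := by
  classical
  rw [Fintype.sum_eq_add_sum_compl i, ← Ioi_disjUnion_Iio, sum_disjUnion]
  abel

end BigOperators

section GeomSum

variable {R : Type*} [Semiring R]

theorem coeff_X_pow_mul_geom_sum (c n m : ℕ) :
    ((X : R[X]) ^ c * ∑ k ∈ range n, X ^ k).coeff m = if m ∈ Ico c (c + n) then 1 else 0 := by
  simp only [coeff_X_pow_mul', finsetSum_coeff, coeff_X_pow, sum_ite_eq, mem_range, mem_Ico]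
  split_ifs <;> first | rfl | omega

theorem lt_of_coeff_X_pow_mul_geom_sum_mul_geom_sum_ne_zero {p a q n : ℕ}
    (h : ((X : R[X]) ^ p * (∑ k ∈ range a, X ^ k) * ∑ k ∈ range q, X ^ k).coeff n ≠ 0) :
    n < p + a + q := by
  rw [coeff_mul] at h
  obtain ⟨⟨u, v⟩, huv, hne⟩ := exists_ne_zero_of_sum_ne_zero h
  have hu : u ∈ Ico p (p + a) := by
    by_contra hu
    simp [coeff_X_pow_mul_geom_sum, hu] at hne
  have hv : v < q := by
    by_contra hv
    simp [coeff_X_pow, hv] at hne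
  rw [HasAntidiagonal.mem_antidiagonal] at huv
  rw [mem_Ico] at hu
  omega

end GeomSum

/-- A polynomial is of decreasing type if its coefficients, once they drop strictly, keep dropping
strictly up to the degree. -/
def IsDecreasingType {R : Type*} [Semiring R] [LT R] (f : R[X]) : Prop :=
  ∀ k, k + 2 ≤ f.natDegree → f.coeff (k + 1) < f.coeff k → f.coeff (k + 2) < f.coeff (k + 1)

section DescentInterval

variable {ι : Type*} [Fintype ι] {a b : ι → ℕ}

/-- The interval `[S + bᵢ - aᵢ, S + bᵢ)`, where `S = ∑ aᵢ`: the `i`-th summand of the h-vector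
contributes `-1` to the first difference of the coefficients at each point of it. The subtraction
does not truncate, as `aᵢ ≤ S`. -/
def descentInterval (a b : ι → ℕ) (i : ι) : Finset ℕ :=
  Ico (∑ k, a k + b i - a i) (∑ k, a k + b i)

theorem card_descentInterval_le_card_succ {m : ℕ} (hm : m + 1 < ∑ i, a i) :
    #{i | m ∈ descentInterval a b i} ≤ #{i | m + 1 ∈ descentInterval a b i} := by
  refine card_le_card fun i hi => ?_
  simp only [descentInterval, mem_filter_univ, mem_Ico] at hi ⊢
  omega

theorem exists_succ_mem_descentInterval [LinearOrder ι] (hb : Antitone b)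
    (hab : ∀ i j, i ⋖ j → b i < a i + b j) {m : ℕ} {i l : ι} (hi : m ∈ descentInterval a b i)
    (hl : m + 1 < ∑ k, a k + b l) :
    ∃ j, m + 1 ∈ descentInterval a b j := by
  have hcd (i j : ι) (hij : i ⋖ j) : ∑ k, a k + b i - a i < ∑ k, a k + b j := by
    have hS : a i ≤ ∑ k, a k := single_le_sum_of_canonicallyOrdered (mem_univ i)
    have := hab i j hij
    omega
  obtain ⟨j, hj⟩ := exists_mem_Ico_of_forall_covBy_lt (hb.const_add (∑ k, a k)) hcd
    ((mem_Ico.mp hi).1.trans m.le_succ) hl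
  exact ⟨j, mem_Ico.mpr hj⟩

end DescentInterval

section HVector

variable {ι : Type*} [LinearOrder ι] [Fintype ι] [LocallyFiniteOrderBot ι]
  [LocallyFiniteOrderTop ι] {a b : ι → ℕ}

/-- The h-vector, as a polynomial, of a codimension-two arithmetically Cohen–Macaulay scheme whose
degree matrix has diagonal `a` and last column `b`. The index set is any finite linear order. -/
noncomputable def hVector (a b : ι → ℕ) : ℤ[X] :=
  ∑ i, X ^ (∑ k ∈ Iio i, a k) * (∑ k ∈ range (a i), X ^ k) *
    ∑ k ∈ range (∑ k ∈ Ioi i, a k + b i), X ^ k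

theorem one_sub_X_mul_hVector :
    (1 - X) * hVector a b = ∑ k ∈ range (∑ i, a i), X ^ k -
      ∑ i, X ^ (∑ k, a k + b i - a i) * ∑ k ∈ range (a i), X ^ k := by
  have tiling : ∑ i, X ^ (∑ k ∈ Iio i, a k) * ∑ k ∈ range (a i), X ^ k =
      ∑ k ∈ range (∑ i, a i), (X : ℤ[X]) ^ k := by
    rw [← sum_sum_range_add_eq_sum_range_sum]
    simp only [mul_sum, ← pow_add, filter_gt_eq_Iio]
  rw [← tiling, ← sum_sub_distrib, hVector, mul_sum]
  refine sum_congr rfl fun i _ => ?_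
  have hstart : ∑ k, a k + b i - a i = ∑ k ∈ Iio i, a k + (∑ k ∈ Ioi i, a k + b i) := by
    have := sum_Iio_add_self_add_sum_Ioi a i
    omega
  rw [hstart, pow_add]
  linear_combination (X ^ (∑ k ∈ Iio i, a k) * ∑ k ∈ range (a i), (X : ℤ[X]) ^ k) *
    mul_neg_geom_sum (X : ℤ[X]) (∑ k ∈ Ioi i, a k + b i)

theorem coeff_succ_sub_coeff_hVector (m : ℕ) :
    (hVector a b).coeff (m + 1) - (hVector a b).coeff m =
      (if m + 1 < ∑ i, a i then 1 else 0) - #{i | m + 1 ∈ descentInterval a b i} := by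
  have hend (i : ι) : ∑ k, a k + b i - a i + a i = ∑ k, a k + b i :=
    Nat.sub_add_cancel (le_add_right (single_le_sum_of_canonicallyOrdered (mem_univ i)))
  have hcoeff := congrArg (coeff · (m + 1)) (one_sub_X_mul_hVector (a := a) (b := b))
  simp only [sub_mul, one_mul, coeff_sub, coeff_X_mul, finsetSum_coeff,
    coeff_X_pow_mul_geom_sum, hend, coeff_X_pow, sum_ite_eq, mem_range] at hcoeff
  rw [hcoeff, natCast_card_filter]
  rfl

theorem exists_lt_of_coeff_hVector_ne_zero {n : ℕ} (h : (hVector a b).coeff n ≠ 0) :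
    ∃ i, n < ∑ k, a k + b i := by
  rw [hVector, finsetSum_coeff] at h
  obtain ⟨i, -, hi⟩ := exists_ne_zero_of_sum_ne_zero h
  have hlt := lt_of_coeff_X_pow_mul_geom_sum_mul_geom_sum_ne_zero hi
  exact ⟨i, by rwa [← add_assoc, sum_Iio_add_self_add_sum_Ioi] at hlt⟩

theorem stmt_4_general (hb : Antitone b) (hab : ∀ i j, i ⋖ j → b i < a i + b j) :
    IsDecreasingType (hVector a b) := by
  intro k hk hdesc
  have hdiff₁ := coeff_succ_sub_coeff_hVector (a := a) (b := b) k
  have hdiff₂ : (hVector a b).coeff (k + 2) - (hVector a b).coeff (k + 1) =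
      (if k + 2 < ∑ i, a i then 1 else 0) - #{i | k + 2 ∈ descentInterval a b i} :=
    coeff_succ_sub_coeff_hVector (k + 1)
  rcases lt_or_ge (k + 2) (∑ i, a i) with hlt | hge
  · have hcard : #{i | k + 1 ∈ descentInterval a b i} ≤ #{i | k + 2 ∈ descentInterval a b i} :=
      card_descentInterval_le_card_succ hlt
    rw [if_pos (by omega)] at hdiff₁ hdiff₂
    omega
  · have hpos : 0 < #{i | k + 1 ∈ descentInterval a b i} := by
      split_ifs at hdiff₁ <;> omega
    obtain ⟨i, hi⟩ := card_pos.mp hpos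
    have hlead : (hVector a b).coeff (hVector a b).natDegree ≠ 0 := by
      rw [coeff_natDegree, leadingCoeff_ne_zero]
      exact ne_zero_of_natDegree_gt (Nat.lt_of_succ_le (Nat.le_of_succ_le hk))
    obtain ⟨l, hl⟩ := exists_lt_of_coeff_hVector_ne_zero hlead
    obtain ⟨j, hj⟩ :=
      exists_succ_mem_descentInterval hb hab ((mem_filter_univ i).mp hi) (hk.trans_lt hl)
    have hpos' : 0 < #{i | k + 2 ∈ descentInterval a b i} :=
      card_pos.mpr ⟨j, (mem_filter_univ j).mpr hj⟩
    rw [if_neg hge.not_gt] at hdiff₂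
    omega

end HVector

/-- The h-vector of a zero-dimensional scheme whose degree matrix has positive
subdiagonal is of decreasing type (remark after Lemma `mat-hvect`).  Here
`aᵢ = a_{i,i}` and `bᵢ = a_{i,t+1}`; the hypotheses express that the matrix is
a degree matrix with positive subdiagonal (`a_{i+1,i} = aᵢ + b_{i+1} - bᵢ ≥ 1`),
and the conclusion says: if `h_k > h_{k+1}` then `h_{k+1} > h_{k+2}`. -/
theorem stmt_4 (t : ℕ) (ht : 1 ≤ t) (a b : Fin t → ℕ)
    (ha : ∀ i, 1 ≤ a i) (hb : ∀ i, 1 ≤ b i)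
    (hba : ∀ i, a i ≤ b i)
    (hbmono : ∀ i j : Fin t, (j : ℕ) = (i : ℕ) + 1 → b j ≤ b i)
    (hdiff : ∀ i j : Fin t, (j : ℕ) = (i : ℕ) + 1 → b j - a j ≤ b i - a i)
    (hsubdiag : ∀ i j : Fin t, (j : ℕ) = (i : ℕ) + 1 → 1 ≤ a i + b j - b i)
    (S : ℕ) (hS : S = ∑ i, a i)
    (p q : Fin t → ℕ)
    (hp : ∀ i, p i = ∑ k ∈ Finset.Iio i, a k)
    (hq : ∀ i, q i = (∑ k ∈ Finset.Ioi i, a k) + b i)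
    (h : Polynomial ℤ)
    (hh : h = ∑ i, X ^ (p i) * (∑ k ∈ Finset.range (a i), X ^ k) *
      (∑ k ∈ Finset.range (q i), X ^ k)) :
    ∀ k : ℕ, k + 2 ≤ h.natDegree →
      h.coeff k > h.coeff (k + 1) → h.coeff (k + 1) > h.coeff (k + 2) := by
  have val_eq {i j : Fin t} (hij : i ⋖ j) : (j : ℕ) = i + 1 :=
    (Nat.covBy_iff_add_one_eq.mp (Fin.covBy_iff.mp hij)).symm
  simp only [hh, hp, hq]
  exact stmt_4_general ((antitone_iff_forall_covBy b).mpr fun i j hij => hbmono i j (val_eq hij))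
    fun i j hij => Nat.lt_of_sub_pos (hsubdiag i j (val_eq hij))
end

section
/- Let k be a field and let a ≥ 2 be an integer. Let φ : k[x_0, x_1, x_2, x_3] → k[s, t] be the k-algebra homomorphism determined by φ(x_0) = s^{2a}, φ(x_1) = s^{2a−1}t, φ(x_2) = s t^{2a−1}, φ(x_3) = t^{2a}. Then the kernel of φ is the ideal generated by x_0 x_3 − x_1 x_2 together with the 2a − 1 binomials x_0^{2a−2−i} x_2^{i+1} − x_1^{2a−1−i} x_3^{i} for i = 0, 1, …, 2a − 2. -/
open MvPolynomial

/-!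
Monomials are sent to monomials, so the kernel is spanned by the differences `x^u - x^v` with
`φ(x^u) = φ(x^v)`, and it suffices to show that such `x^u` and `x^v` agree modulo the generators.
Let `n` be the degree of the curve, which is `2a` in the theorem. The generators give
`x₁x₂ = x₀x₃`, and hence also `x₁ⁿ = x₀ⁿ⁻¹x₃` and `x₂ⁿ = x₀x₃ⁿ⁻¹`. The first relation removes `x₁`
or `x₂` from a monomial; the other two reduce the exponent of the remaining one modulo `n`.
If the same variable remains in `x^u` and `x^v`, the reduced forms coincide. If `x₁ᵇ` remains in one
and `x₂ᶜ` in the other, then `n ∣ b + c`, so the reduced exponents either vanish or add up to `n`;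
in the second case one of the other generators exchanges the two forms.
-/

section ToricIdeal

variable {σ τ R : Type*}

theorem aeval_monomial_monomial [CommSemiring R] (A : σ → τ →₀ ℕ) (u : σ →₀ ℕ) (r : R) :
    aeval (fun i => monomial (A i) (1 : R)) (monomial u r) = monomial (Finsupp.weight A u) r := by
  simp only [aeval_monomial, algebraMap_eq, monomial_pow, one_pow, Finsupp.weight_apply,
    monomial_finsupp_sum_index, Finsupp.prod]

theorem ker_aeval_monomial_eq_span [CommRing R] (A : σ → τ →₀ ℕ) :
    RingHom.ker (aeval (fun i => monomial (A i) (1 : R))) =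
      Ideal.span {p | ∃ u v, Finsupp.weight A u = Finsupp.weight A v ∧
        p = monomial u (1 : R) - monomial v 1} := by
  set φ : MvPolynomial σ R →ₐ[R] MvPolynomial τ R := aeval (fun i => monomial (A i) 1) with hφ
  set I : Ideal (MvPolynomial σ R) := Ideal.span _
  refine le_antisymm (fun p hp => ?_) (Ideal.span_le.mpr ?_)
  · let lift : (τ →₀ ℕ) → σ →₀ ℕ := Function.invFun (Finsupp.weight A)
    let ψ : MvPolynomial τ R →ₗ[R] MvPolynomial σ R :=
      (basisMonomials τ R).constr R fun w => monomial (lift w) 1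
    have ψ_monomial (w : τ →₀ ℕ) : ψ (monomial w 1) = monomial (lift w) 1 := by
      simpa only [coe_basisMonomials] using (basisMonomials τ R).constr_basis R _ w
    have mk_comp : (Ideal.Quotient.mkₐ R I).toLinearMap ∘ₗ ψ ∘ₗ φ.toLinearMap =
        (Ideal.Quotient.mkₐ R I).toLinearMap := by
      refine (basisMonomials σ R).ext fun u => ?_
      simp only [coe_basisMonomials, LinearMap.comp_apply, AlgHom.toLinearMap_apply, hφ,
        aeval_monomial_monomial, ψ_monomial, Ideal.Quotient.mkₐ_eq_mk]
      exact Ideal.Quotient.eq.mpr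
        (Ideal.subset_span ⟨_, _, Function.invFun_eq ⟨u, rfl⟩, rfl⟩)
    have mk_eq := LinearMap.congr_fun mk_comp p
    simp only [LinearMap.comp_apply, AlgHom.toLinearMap_apply, RingHom.mem_ker.mp hp,
      map_zero] at mk_eq
    exact Ideal.Quotient.eq_zero_iff_mem.mp mk_eq.symm
  · rintro _ ⟨u, v, h, rfl⟩
    simp only [SetLike.mem_coe, RingHom.mem_ker, map_sub, hφ, aeval_monomial_monomial, h, sub_self]

end ToricIdeal

/-- The binomial equations of the rational curve of degree `m + 2`, for four elements of a
commutative monoid. Indexing by pairs `i + j = m` avoids truncated subtraction. -/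
structure CurveRelations {M : Type*} [CommMonoid M] (m : ℕ) (x₀ x₁ x₂ x₃ : M) : Prop where
  quadric : x₀ * x₃ = x₁ * x₂
  binomial : ∀ i j, i + j = m → x₀ ^ j * x₂ ^ (i + 1) = x₁ ^ (j + 1) * x₃ ^ i

namespace CurveRelations

variable {M : Type*} [CommMonoid M] {m : ℕ} {x₀ x₁ x₂ x₃ : M}

theorem symm (h : CurveRelations m x₀ x₁ x₂ x₃) : CurveRelations m x₃ x₂ x₁ x₀ where
  quadric := by rw [mul_comm, h.quadric, mul_comm]
  binomial i j hij := by
    rw [mul_comm, ← h.binomial j i (by omega), mul_comm]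

theorem x₁_pow (h : CurveRelations m x₀ x₁ x₂ x₃) : x₁ ^ (m + 2) = x₀ ^ (m + 1) * x₃ :=
  calc x₁ ^ (m + 2) = x₁ ^ (m + 1) * x₃ ^ 0 * x₁ := by rw [pow_zero, mul_one, ← pow_succ]
    _ = x₀ ^ m * (x₁ * x₂) := by
      rw [← h.binomial 0 m (zero_add m), zero_add, pow_one, mul_assoc, mul_comm x₂]
    _ = x₀ ^ (m + 1) * x₃ := by rw [← h.quadric, ← mul_assoc, ← pow_succ]

theorem reduce_x₁ (h : CurveRelations m x₀ x₁ x₂ x₃) (a r d q : ℕ) :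
    x₀ ^ a * x₁ ^ (r + (m + 2) * q) * x₃ ^ d =
      x₀ ^ (a + (m + 1) * q) * x₁ ^ r * x₃ ^ (d + q) := by
  rw [pow_add x₁, pow_mul, h.x₁_pow, mul_pow, ← pow_mul, pow_add x₀, pow_add x₃]
  ac_rfl

theorem eq_of_weight_eq_without_x₂ (h : CurveRelations m x₀ x₁ x₂ x₃) {a b d a' b' d' : ℕ}
    (hs : (m + 2) * a + (m + 1) * b = (m + 2) * a' + (m + 1) * b')
    (ht : b + (m + 2) * d = b' + (m + 2) * d') :
    x₀ ^ a * x₁ ^ b * x₃ ^ d = x₀ ^ a' * x₁ ^ b' * x₃ ^ d' := by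
  wlog hd : d ≤ d' generalizing a b d a' b' d'
  · exact (this hs.symm ht.symm (le_of_not_ge hd)).symm
  obtain ⟨q, rfl⟩ := Nat.exists_eq_add_of_le hd
  obtain rfl : b = b' + (m + 2) * q := by linear_combination ht
  obtain rfl : a' = a + (m + 1) * q := by
    refine Nat.eq_of_mul_eq_mul_left (show 0 < m + 2 by positivity) ?_
    linear_combination -hs
  exact h.reduce_x₁ a b' d q

theorem eq_of_weight_eq_of_lt (h : CurveRelations m x₀ x₁ x₂ x₃) {a b d a' c d' : ℕ}
    (hb : b < m + 2) (hc : c < m + 2)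
    (hs : (m + 2) * a + (m + 1) * b = (m + 2) * a' + c)
    (ht : b + (m + 2) * d = (m + 1) * c + (m + 2) * d') :
    x₀ ^ a * x₁ ^ b * x₃ ^ d = x₀ ^ a' * x₂ ^ c * x₃ ^ d' := by
  have hm : 0 < m + 2 := by positivity
  obtain ⟨k, hk⟩ : m + 2 ∣ b + c :=
    (Nat.dvd_add_left (dvd_mul_right (m + 2) d)).mp ⟨c + d', by linear_combination ht⟩
  have hk_lt : k < 2 := lt_of_mul_lt_mul_left (by omega : (m + 2) * k < (m + 2) * 2) hm.le
  interval_cases k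
  · obtain ⟨rfl, rfl⟩ : b = 0 ∧ c = 0 := by omega
    obtain rfl : a = a' := Nat.eq_of_mul_eq_mul_left hm (by linear_combination hs)
    obtain rfl : d = d' := Nat.eq_of_mul_eq_mul_left hm (by linear_combination ht)
    rw [pow_zero, pow_zero]
  · obtain ⟨i, j, rfl, rfl, rfl⟩ : ∃ i j, i + j = m ∧ b = j + 1 ∧ c = i + 1 :=
      ⟨c - 1, b - 1, by omega⟩
    obtain rfl : a' = a + j := Nat.eq_of_mul_eq_mul_left hm (by linear_combination -hs)
    obtain rfl : d = i + d' := Nat.eq_of_mul_eq_mul_left hm (by linear_combination ht)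
    calc x₀ ^ a * x₁ ^ (j + 1) * x₃ ^ (i + d')
        = x₀ ^ a * (x₁ ^ (j + 1) * x₃ ^ i) * x₃ ^ d' := by rw [pow_add x₃]; ac_rfl
      _ = x₀ ^ (a + j) * x₂ ^ (i + 1) * x₃ ^ d' := by
        rw [← h.binomial i j rfl, pow_add x₀]; ac_rfl

theorem eq_of_weight_eq_x₁_x₂ (h : CurveRelations m x₀ x₁ x₂ x₃) {a b d a' c d' : ℕ}
    (hs : (m + 2) * a + (m + 1) * b = (m + 2) * a' + c)
    (ht : b + (m + 2) * d = (m + 1) * c + (m + 2) * d') :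
    x₀ ^ a * x₁ ^ b * x₃ ^ d = x₀ ^ a' * x₂ ^ c * x₃ ^ d' := by
  have hm : 0 < m + 2 := by positivity
  obtain ⟨r, q, hr, rfl⟩ : ∃ r q, r < m + 2 ∧ b = r + (m + 2) * q :=
    ⟨b % (m + 2), b / (m + 2), Nat.mod_lt b hm, (Nat.mod_add_div b (m + 2)).symm⟩
  obtain ⟨r', q', hr', rfl⟩ : ∃ r' q', r' < m + 2 ∧ c = r' + (m + 2) * q' :=
    ⟨c % (m + 2), c / (m + 2), Nat.mod_lt c hm, (Nat.mod_add_div c (m + 2)).symm⟩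
  calc x₀ ^ a * x₁ ^ (r + (m + 2) * q) * x₃ ^ d
      = x₀ ^ (a + (m + 1) * q) * x₁ ^ r * x₃ ^ (d + q) := h.reduce_x₁ a r d q
    _ = x₀ ^ (a' + q') * x₂ ^ r' * x₃ ^ (d' + (m + 1) * q') :=
      h.eq_of_weight_eq_of_lt hr hr' (by linear_combination hs) (by linear_combination ht)
    _ = x₃ ^ (d' + (m + 1) * q') * x₂ ^ r' * x₀ ^ (a' + q') := by ac_rfl
    _ = x₃ ^ d' * x₂ ^ (r' + (m + 2) * q') * x₀ ^ a' := (h.symm.reduce_x₁ d' r' a' q').symm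
    _ = x₀ ^ a' * x₂ ^ (r' + (m + 2) * q') * x₃ ^ d' := by ac_rfl

theorem exists_eq_without_x₁_or_x₂ (h : CurveRelations m x₀ x₁ x₂ x₃) (a b c d : ℕ) :
    ∃ a' b' c' d', (b' = 0 ∨ c' = 0) ∧
      x₀ ^ a * x₁ ^ b * x₂ ^ c * x₃ ^ d = x₀ ^ a' * x₁ ^ b' * x₂ ^ c' * x₃ ^ d' ∧
      (m + 2) * a + (m + 1) * b + c = (m + 2) * a' + (m + 1) * b' + c' ∧
      b + (m + 1) * c + (m + 2) * d = b' + (m + 1) * c' + (m + 2) * d' := by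
  obtain ⟨e, b', c', he, rfl, rfl⟩ : ∃ e b' c', (b' = 0 ∨ c' = 0) ∧ b = b' + e ∧ c = c' + e :=
    ⟨min b c, b - min b c, c - min b c, by omega⟩
  refine ⟨a + e, b', c', d + e, he, ?_, by ring, by ring⟩
  have quadric_pow : x₀ ^ e * x₃ ^ e = x₁ ^ e * x₂ ^ e := by
    rw [← mul_pow, h.quadric, mul_pow]
  calc x₀ ^ a * x₁ ^ (b' + e) * x₂ ^ (c' + e) * x₃ ^ d
      = x₀ ^ a * x₁ ^ b' * x₂ ^ c' * x₃ ^ d * (x₁ ^ e * x₂ ^ e) := by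
        rw [pow_add x₁, pow_add x₂]; ac_rfl
    _ = x₀ ^ (a + e) * x₁ ^ b' * x₂ ^ c' * x₃ ^ (d + e) := by
        rw [← quadric_pow, pow_add x₀, pow_add x₃]; ac_rfl

theorem eq_of_weight_eq (h : CurveRelations m x₀ x₁ x₂ x₃) {a b c d a' b' c' d' : ℕ}
    (hs : (m + 2) * a + (m + 1) * b + c = (m + 2) * a' + (m + 1) * b' + c')
    (ht : b + (m + 1) * c + (m + 2) * d = b' + (m + 1) * c' + (m + 2) * d') :
    x₀ ^ a * x₁ ^ b * x₂ ^ c * x₃ ^ d = x₀ ^ a' * x₁ ^ b' * x₂ ^ c' * x₃ ^ d' := by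
  obtain ⟨a₁, b₁, c₁, d₁, hbc₁, heq₁, hs₁, ht₁⟩ := h.exists_eq_without_x₁_or_x₂ a b c d
  obtain ⟨a₂, b₂, c₂, d₂, hbc₂, heq₂, hs₂, ht₂⟩ := h.exists_eq_without_x₁_or_x₂ a' b' c' d'
  rw [heq₁, heq₂]
  replace hs := hs₁.symm.trans (hs.trans hs₂)
  replace ht := ht₁.symm.trans (ht.trans ht₂)
  rcases hbc₁ with rfl | rfl <;> rcases hbc₂ with rfl | rfl <;>
    simp only [pow_zero, mul_one, mul_zero, add_zero, zero_add] at hs ht ⊢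
  · calc x₀ ^ a₁ * x₂ ^ c₁ * x₃ ^ d₁
        = x₃ ^ d₁ * x₂ ^ c₁ * x₀ ^ a₁ := by ac_rfl
      _ = x₃ ^ d₂ * x₂ ^ c₂ * x₀ ^ a₂ :=
        h.symm.eq_of_weight_eq_without_x₂ (by linear_combination ht) (by linear_combination hs)
      _ = x₀ ^ a₂ * x₂ ^ c₂ * x₃ ^ d₂ := by ac_rfl
  · exact (h.eq_of_weight_eq_x₁_x₂ hs.symm ht.symm).symm
  · exact h.eq_of_weight_eq_x₁_x₂ hs ht
  · exact h.eq_of_weight_eq_without_x₂ hs ht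

end CurveRelations

/-- The ideal of `R[x₀, x₁, x₂, x₃]` generated by the expected equations of the rational curve of
degree `m + 2`. -/
noncomputable def curveIdeal (R : Type*) [CommRing R] (m : ℕ) : Ideal (MvPolynomial (Fin 4) R) :=
  Ideal.span ({X 0 * X 3 - X 1 * X 2} ∪
    Set.range (fun i : Fin (m + 1) =>
      (X 0 : MvPolynomial (Fin 4) R) ^ (m - (i : ℕ)) * X 2 ^ ((i : ℕ) + 1)
        - X 1 ^ (m + 1 - (i : ℕ)) * X 3 ^ (i : ℕ)))

/-- The exponents of the four monomials `s ^ (m + 2)`, `s ^ (m + 1) * t`, `s * t ^ (m + 1)`,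
`t ^ (m + 2)` parametrizing the rational curve of degree `m + 2`. -/
noncomputable def curveExponent (m : ℕ) : Fin 4 → Fin 2 →₀ ℕ :=
  ![.single 0 (m + 2), .single 0 (m + 1) + .single 1 1,
    .single 0 1 + .single 1 (m + 1), .single 1 (m + 2)]

section Curve

variable {R S : Type*} {m : ℕ}

theorem curveIdeal_le_ker_iff [CommRing R] [CommRing S]
    (f : MvPolynomial (Fin 4) R →+* S) :
    curveIdeal R m ≤ RingHom.ker f ↔
      CurveRelations m (f (X 0)) (f (X 1)) (f (X 2)) (f (X 3)) := by
  simp only [curveIdeal, Ideal.span_le, Set.union_subset_iff, Set.singleton_subset_iff,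
    Set.range_subset_iff, SetLike.mem_coe, RingHom.mem_ker, map_sub, map_mul, map_pow, sub_eq_zero]
  constructor
  · rintro ⟨quadric, binomial⟩
    refine ⟨quadric, fun i j hij => ?_⟩
    convert binomial ⟨i, by omega⟩ using 3 <;> dsimp only <;> omega
  · rintro ⟨quadric, binomial⟩
    refine ⟨quadric, fun i => ?_⟩
    convert binomial i (m - i) (by omega) using 3
    omega

theorem curveRelations_parametrization [CommSemiring S] (s t : S) :
    CurveRelations m (s ^ (m + 2)) (s ^ (m + 1) * t) (s * t ^ (m + 1)) (t ^ (m + 2)) where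
  quadric := by ring
  binomial := by
    rintro i j rfl
    ring

theorem weight_curveExponent_zero (u : Fin 4 →₀ ℕ) :
    Finsupp.weight (curveExponent m) u 0 = (m + 2) * u 0 + (m + 1) * u 1 + u 2 := by
  simp [Finsupp.weight_eq_sum, Fin.sum_univ_four, curveExponent, add_mul, mul_comm]

theorem weight_curveExponent_one (u : Fin 4 →₀ ℕ) :
    Finsupp.weight (curveExponent m) u 1 = u 1 + (m + 1) * u 2 + (m + 2) * u 3 := by
  simp [Finsupp.weight_eq_sum, Fin.sum_univ_four, curveExponent, add_mul, mul_comm]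

theorem map_monomial_fin_four [CommSemiring R] [CommSemiring S]
    (f : MvPolynomial (Fin 4) R →+* S) (u : Fin 4 →₀ ℕ) :
    f (monomial u 1) = f (X 0) ^ u 0 * f (X 1) ^ u 1 * f (X 2) ^ u 2 * f (X 3) ^ u 3 := by
  rw [monomial_eq, Finsupp.prod_fintype _ _ fun _ => pow_zero _]
  simp only [C_1, one_mul, Fin.prod_univ_four, map_mul, map_pow]

theorem monomial_sub_monomial_mem_curveIdeal [CommRing R] {u v : Fin 4 →₀ ℕ}
    (h : Finsupp.weight (curveExponent m) u = Finsupp.weight (curveExponent m) v) :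
    (monomial u 1 - monomial v 1 : MvPolynomial (Fin 4) R) ∈ curveIdeal R m := by
  have relations := (curveIdeal_le_ker_iff (Ideal.Quotient.mk (curveIdeal R m))).mp
    (Ideal.mk_ker).ge
  rw [← Ideal.Quotient.eq, map_monomial_fin_four, map_monomial_fin_four]
  apply relations.eq_of_weight_eq
  · rw [← weight_curveExponent_zero, h, weight_curveExponent_zero]
  · rw [← weight_curveExponent_one, h, weight_curveExponent_one]

theorem monomial_curveExponent [CommSemiring R] :
    (fun i => monomial (curveExponent m i) (1 : R)) =
      fun i => ![X 0 ^ (m + 2), X 0 ^ (m + 1) * X 1, X 0 * X 1 ^ (m + 1), X 1 ^ (m + 2)] i := by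
  funext i
  fin_cases i <;> simp [curveExponent, X, monomial_pow, monomial_mul, -Finsupp.single_add]

end Curve

theorem stmt_6_general (k : Type*) [CommRing k] (n : ℕ) (hn : 2 ≤ n) :
    RingHom.ker (aeval (R := k) (fun i : Fin 4 =>
      ![(X 0 : MvPolynomial (Fin 2) k) ^ n, X 0 ^ (n - 1) * X 1, X 0 * X 1 ^ (n - 1),
        X 1 ^ n] i)) =
    Ideal.span ({X 0 * X 3 - X 1 * X 2} ∪
      Set.range (fun i : Fin (n - 1) =>
        (X 0 : MvPolynomial (Fin 4) k) ^ (n - 2 - (i : ℕ)) * X 2 ^ ((i : ℕ) + 1)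
          - X 1 ^ (n - 1 - (i : ℕ)) * X 3 ^ (i : ℕ))) := by
  obtain ⟨m, rfl⟩ := Nat.exists_eq_add_of_le' hn
  change RingHom.ker (aeval (R := k) fun i => ![(X 0 : MvPolynomial (Fin 2) k) ^ (m + 2),
    X 0 ^ (m + 1) * X 1, X 0 * X 1 ^ (m + 1), X 1 ^ (m + 2)] i) = curveIdeal k m
  apply le_antisymm
  · rw [← monomial_curveExponent, ker_aeval_monomial_eq_span, Ideal.span_le]
    rintro _ ⟨u, v, h, rfl⟩
    exact monomial_sub_monomial_mem_curveIdeal h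
  · refine (curveIdeal_le_ker_iff (AlgHom.toRingHom _)).mpr ?_
    simpa using curveRelations_parametrization (X 0 : MvPolynomial (Fin 2) k) (X 1)

/-- Example `rat`: the kernel of the `k`-algebra map
`k[x₀,x₁,x₂,x₃] → k[s,t]`, `x₀ ↦ s^(2a)`, `x₁ ↦ s^(2a-1)t`, `x₂ ↦ st^(2a-1)`,
`x₃ ↦ t^(2a)` (for `a ≥ 2`) is generated by `x₀x₃ - x₁x₂` together with the
`2a - 1` binomials `x₀^(2a-2-i) x₂^(i+1) - x₁^(2a-1-i) x₃^i`, `i = 0,…,2a-2`. -/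
theorem stmt_6 (k : Type*) [Field k] (a : ℕ) (ha : 2 ≤ a) :
    RingHom.ker (aeval (R := k) (fun i : Fin 4 =>
      ![(X 0 : MvPolynomial (Fin 2) k) ^ (2 * a),
        X 0 ^ (2 * a - 1) * X 1,
        X 0 * X 1 ^ (2 * a - 1),
        X 1 ^ (2 * a)] i)) =
    Ideal.span ({X 0 * X 3 - X 1 * X 2} ∪
      Set.range (fun i : Fin (2 * a - 1) =>
        (X 0 : MvPolynomial (Fin 4) k) ^ (2 * a - 2 - (i : ℕ)) * X 2 ^ ((i : ℕ) + 1)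
          - X 1 ^ (2 * a - 1 - (i : ℕ)) * X 3 ^ (i : ℕ))) :=
  stmt_6_general k (2 * a) (by omega)
end

section
/- Let k be a field and let a ≥ 2 be an even integer. Let φ : k[x_0, x_1, x_2, x_3] → k[s, t] be the k-algebra homomorphism determined by φ(x_0) = s^{2a}, φ(x_1) = s^{a+1} t^{a−1}, φ(x_2) = s^{a−1} t^{a+1}, φ(x_3) = t^{2a}. Then the kernel of φ is the ideal generated by the four polynomials x_0 x_3 − x_1 x_2, x_0^2 x_2^{a−1} − x_1^{a+1}, x_0 x_2^{a} − x_1^{a} x_3, and x_2^{a+1} − x_1^{a−1} x_3^2. -/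
open MvPolynomial

/-!
The kernel of a map of polynomial rings sending monomials to monomials is spanned by binomials, so
one has to show that two monomials with the same image agree modulo the given relations. Write
`x₀ = u₀v₀`, `x₁ = u₀v₁`, `x₂ = u₁v₀`, `x₃ = u₁v₁`: modulo `x₀x₃ - x₁x₂` a monomial is determined by
its exponents in `u₀, u₁, v₀, v₁`, and the curve is `u = (s ^ (n + d) : t ^ (n + d))`,
`v = (s ^ n : t ^ n)` with `n` and `d` coprime (here `n = a - 1`, `d = 2`). By coprimality, two
monomials with the same image differ by a power of `u₁ ^ n v₀ ^ (n + d) ↦ u₀ ^ n v₁ ^ (n + d)`, and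
modulo the quadric each such exchange is one of the other relations
`x₀ ^ i x₂ ^ (n + j) = x₁ ^ (n + i) x₃ ^ j`, `i + j = d`.
-/

section BinomialIdeal

variable {R σ τ : Type*} [CommRing R]

theorem ker_eq_span_binomials (φ : MvPolynomial σ R →ₐ[R] MvPolynomial τ R)
    (w : (σ →₀ ℕ) → (τ →₀ ℕ)) (hφ : ∀ p, φ (monomial p 1) = monomial (w p) 1) :
    RingHom.ker φ =
      Ideal.span {f | ∃ p q, w p = w q ∧ f = monomial p 1 - monomial q 1} := by
  set I : Ideal (MvPolynomial σ R) :=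
    Ideal.span {f | ∃ p q, w p = w q ∧ f = monomial p 1 - monomial q 1}
  apply le_antisymm
  · -- Choosing a preimage of each monomial in the image factors the quotient map through `φ`.
    let L : MvPolynomial τ R →ₗ[R] MvPolynomial σ R ⧸ I :=
      (basisMonomials τ R).constr R fun m ↦
        Ideal.Quotient.mk I (monomial (Function.invFun w m) 1)
    have L_monomial (m : τ →₀ ℕ) :
        L (monomial m 1) = Ideal.Quotient.mk I (monomial (Function.invFun w m) 1) := by
      simpa only [coe_basisMonomials] using (basisMonomials τ R).constr_basis R _ m
    have L_comp : L ∘ₗ φ.toLinearMap = (Ideal.Quotient.mkₐ R I).toLinearMap := by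
      refine (basisMonomials σ R).ext fun p ↦ ?_
      simp only [coe_basisMonomials, LinearMap.comp_apply, AlgHom.toLinearMap_apply, hφ, L_monomial]
      exact Ideal.Quotient.eq.mpr <|
        Ideal.subset_span ⟨_, p, Function.invFun_eq ⟨p, rfl⟩, rfl⟩
    intro f hf
    have hLf : L (φ f) = Ideal.Quotient.mk I f := LinearMap.congr_fun L_comp f
    rw [RingHom.mem_ker.mp hf, map_zero] at hLf
    exact Ideal.Quotient.eq_zero_iff_mem.mp hLf.symm
  · rw [Ideal.span_le]
    rintro _ ⟨p, q, hpq, rfl⟩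
    simp [RingHom.mem_ker, hφ, hpq]

end BinomialIdeal

theorem exists_eq_mul_of_isCoprime_of_mul_eq_mul {R : Type*} [CommRing R] {m n x y : R}
    (h : IsCoprime m n) (hxy : m * x = n * y) : ∃ k, x = n * k ∧ y = m * k := by
  obtain ⟨u, v, huv⟩ := h
  exact ⟨u * y + v * x, by linear_combination -x * huv + u * hxy,
    by linear_combination -y * huv - v * hxy⟩

section Monomials

variable {M : Type*} [CommMonoid M] {x : Fin 4 → M} {n d : ℕ} {p q : Fin 4 → ℕ}

theorem prod_pow_eq_of_segre (hx : x 0 * x 3 = x 1 * x 2) (h₀₁ : p 0 + p 1 = q 0 + q 1)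
    (h₂₃ : p 2 + p 3 = q 2 + q 3) (h₀₂ : p 0 + p 2 = q 0 + q 2) :
    ∏ i, x i ^ p i = ∏ i, x i ^ q i := by
  wlog hle : q 0 ≤ p 0 generalizing p q
  · exact (this h₀₁.symm h₂₃.symm h₀₂.symm (by omega)).symm
  obtain ⟨e, hp₀⟩ := Nat.exists_eq_add_of_le hle
  obtain ⟨hq₁, hq₂, hp₃⟩ : q 1 = p 1 + e ∧ q 2 = p 2 + e ∧ p 3 = q 3 + e := by omega
  have hxe : x 0 ^ e * x 3 ^ e = x 1 ^ e * x 2 ^ e := by rw [← mul_pow, hx, mul_pow]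
  calc ∏ i, x i ^ p i
    _ = x 0 ^ q 0 * x 1 ^ p 1 * x 2 ^ p 2 * x 3 ^ q 3 * (x 0 ^ e * x 3 ^ e) := by
      simp only [Fin.prod_univ_four, hp₀, hp₃, pow_add]
      ac_rfl
    _ = x 0 ^ q 0 * x 1 ^ p 1 * x 2 ^ p 2 * x 3 ^ q 3 * (x 1 ^ e * x 2 ^ e) := by rw [hxe]
    _ = ∏ i, x i ^ q i := by
      simp only [Fin.prod_univ_four, hq₁, hq₂, pow_add]
      ac_rfl

theorem exists_segre_eq_add (h₂₃ : n ≤ p 2 + p 3) (h₀₂ : n + d ≤ p 0 + p 2) :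
    ∃ (i j : ℕ) (r : Fin 4 → ℕ), i + j = d ∧ p 0 + p 1 = r 0 + i + r 1 ∧
      p 2 + p 3 = r 2 + (n + j) + r 3 ∧ p 0 + p 2 = r 0 + i + (r 2 + (n + j)) := by
  -- Modulo the quadric, either `x₀` or `x₃` can be eliminated from the monomial `x ^ p`; what is
  -- left is divisible by some `x₀ ^ i x₂ ^ (n + j)`.
  rcases le_total (p 0) (p 3) with h | h
  · exact ⟨0, d, ![0, p 0 + p 1, p 0 + p 2 - (n + d), p 3 - p 0], by
      simp only [Matrix.cons_val]
      omega⟩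
  · refine ⟨d - min d (p 2 + p 3 - n), min d (p 2 + p 3 - n),
      ![p 0 - p 3 - (d - min d (p 2 + p 3 - n)), p 1 + p 3,
        p 2 + p 3 - n - min d (p 2 + p 3 - n), 0], ?_⟩
    simp only [Matrix.cons_val]
    omega

theorem exists_prod_pow_eq_exchange (hx : x 0 * x 3 = x 1 * x 2)
    (hrel : ∀ i j, i + j = d → x 0 ^ i * x 2 ^ (n + j) = x 1 ^ (n + i) * x 3 ^ j)
    (h₂₃ : n ≤ p 2 + p 3) (h₀₂ : n + d ≤ p 0 + p 2) :
    ∃ q : Fin 4 → ℕ, ∏ i, x i ^ p i = ∏ i, x i ^ q i ∧ q 0 + q 1 = p 0 + p 1 + n ∧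
      q 2 + q 3 + n = p 2 + p 3 ∧ q 0 + q 2 + (n + d) = p 0 + p 2 := by
  obtain ⟨i, j, r, hij, hr₀₁, hr₂₃, hr₀₂⟩ := exists_segre_eq_add h₂₃ h₀₂
  refine ⟨![r 0, r 1 + (n + i), r 2, r 3 + j], ?_, by simp only [Matrix.cons_val]; omega⟩
  calc ∏ l, x l ^ p l
    _ = ∏ l, x l ^ ![r 0 + i, r 1, r 2 + (n + j), r 3] l :=
      prod_pow_eq_of_segre hx hr₀₁ hr₂₃ hr₀₂
    _ = (∏ l, x l ^ r l) * (x 0 ^ i * x 2 ^ (n + j)) := by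
      simp only [Fin.prod_univ_four, Matrix.cons_val, pow_add]
      ac_rfl
    _ = (∏ l, x l ^ r l) * (x 1 ^ (n + i) * x 3 ^ j) := by rw [hrel i j hij]
    _ = ∏ l, x l ^ ![r 0, r 1 + (n + i), r 2, r 3 + j] l := by
      simp only [Fin.prod_univ_four, Matrix.cons_val, pow_add]
      ac_rfl

theorem prod_pow_eq_of_exchanges (hx : x 0 * x 3 = x 1 * x 2)
    (hrel : ∀ i j, i + j = d → x 0 ^ i * x 2 ^ (n + j) = x 1 ^ (n + i) * x 3 ^ j) (k : ℕ)
    (h₀₁ : q 0 + q 1 = p 0 + p 1 + n * k) (h₂₃ : q 2 + q 3 + n * k = p 2 + p 3)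
    (h₀₂ : q 0 + q 2 + (n + d) * k = p 0 + p 2) :
    ∏ i, x i ^ p i = ∏ i, x i ^ q i := by
  induction k generalizing p with
  | zero => exact prod_pow_eq_of_segre hx h₀₁.symm h₂₃.symm h₀₂.symm
  | succ k ih =>
    rw [mul_add_one] at h₀₁ h₂₃ h₀₂
    obtain ⟨r, hpr, hr₀₁, hr₂₃, hr₀₂⟩ :=
      exists_prod_pow_eq_exchange (p := p) hx hrel (by omega) (by omega)
    exact hpr.trans (ih (by omega) (by omega) (by omega))

theorem exists_exchanges_of_weight_eq (hnd : n.Coprime d)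
    (hs : (2 * n + d) * p 0 + (n + d) * p 1 + n * p 2 =
      (2 * n + d) * q 0 + (n + d) * q 1 + n * q 2)
    (ht : n * p 1 + (n + d) * p 2 + (2 * n + d) * p 3 =
      n * q 1 + (n + d) * q 2 + (2 * n + d) * q 3) :
    ∃ k : ℤ, (q 0 + q 1 : ℤ) = p 0 + p 1 + n * k ∧ (q 2 + q 3 + n * k : ℤ) = p 2 + p 3 ∧
      (q 0 + q 2 + (n + d) * k : ℤ) = p 0 + p 2 := by
  zify at hs ht
  have hpos : (2 * n + d : ℤ) ≠ 0 := by
    have : ¬(n = 0 ∧ d = 0) := by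
      rintro ⟨rfl, rfl⟩
      simp at hnd
    omega
  have hdeg : (p 0 + p 1 + p 2 + p 3 : ℤ) = q 0 + q 1 + q 2 + q 3 :=
    mul_left_cancel₀ hpos (by linear_combination hs + ht)
  have hcop : IsCoprime (n + d : ℤ) n := by
    exact_mod_cast (Nat.coprime_self_add_left.mpr hnd.symm).isCoprime
  obtain ⟨k, h₀₁, h₀₂⟩ := exists_eq_mul_of_isCoprime_of_mul_eq_mul hcop
    (x := (q 0 + q 1 : ℤ) - (p 0 + p 1)) (y := (p 0 + p 2 : ℤ) - (q 0 + q 2))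
    (by linear_combination -hs)
  exact ⟨k, by linear_combination h₀₁, by linear_combination -h₀₁ - hdeg,
    by linear_combination -h₀₂⟩

theorem prod_pow_eq_of_weight_eq (hnd : n.Coprime d) (hx : x 0 * x 3 = x 1 * x 2)
    (hrel : ∀ i j, i + j = d → x 0 ^ i * x 2 ^ (n + j) = x 1 ^ (n + i) * x 3 ^ j)
    (hs : (2 * n + d) * p 0 + (n + d) * p 1 + n * p 2 =
      (2 * n + d) * q 0 + (n + d) * q 1 + n * q 2)
    (ht : n * p 1 + (n + d) * p 2 + (2 * n + d) * p 3 =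
      n * q 1 + (n + d) * q 2 + (2 * n + d) * q 3) :
    ∏ i, x i ^ p i = ∏ i, x i ^ q i := by
  obtain ⟨k, h₀₁, h₂₃, h₀₂⟩ := exists_exchanges_of_weight_eq hnd hs ht
  obtain ⟨l, rfl | rfl⟩ := k.eq_nat_or_neg
  · exact prod_pow_eq_of_exchanges hx hrel l (by exact_mod_cast h₀₁) (by exact_mod_cast h₂₃)
      (by exact_mod_cast h₀₂)
  · refine (prod_pow_eq_of_exchanges hx hrel l ?_ ?_ ?_).symm <;> zify <;> linarith

end Monomials

section Curve

variable (R : Type*) [CommRing R] (n d : ℕ)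

/-- The comorphism of the parametrization
`(s : t) ↦ (s ^ (2n + d) : s ^ (n + d) t ^ n : s ^ n t ^ (n + d) : t ^ (2n + d))` of a rational
curve on the quadric `x₀x₃ = x₁x₂`. -/
noncomputable def quadricCurveMap : MvPolynomial (Fin 4) R →ₐ[R] MvPolynomial (Fin 2) R :=
  aeval ![X 0 ^ (2 * n + d), X 0 ^ (n + d) * X 1 ^ n, X 0 ^ n * X 1 ^ (n + d), X 1 ^ (2 * n + d)]

/-- The generators of the ideal of the curve parametrized by `quadricCurveMap`. The pairs `(i, j)`
with `i + j = d` index the non-quadric ones, which avoids truncated subtraction in exponents. -/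
def quadricCurveGenerators : Set (MvPolynomial (Fin 4) R) :=
  insert (X 0 * X 3 - X 1 * X 2)
    ((fun ij : ℕ × ℕ ↦ X 0 ^ ij.1 * X 2 ^ (n + ij.2) - X 1 ^ (n + ij.1) * X 3 ^ ij.2) ''
      Finset.HasAntidiagonal.antidiagonal d)

theorem quadricCurveGenerators_two :
    quadricCurveGenerators R n 2 = {X 0 * X 3 - X 1 * X 2,
      X 0 ^ 2 * X 2 ^ n - X 1 ^ (n + 2),
      X 0 * X 2 ^ (n + 1) - X 1 ^ (n + 1) * X 3,
      X 2 ^ (n + 2) - X 1 ^ n * X 3 ^ 2} := by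
  have antidiagonal_two :
      Finset.HasAntidiagonal.antidiagonal 2 = {(2, 0), (1, 1), (0, 2)} := by decide
  simp [quadricCurveGenerators, antidiagonal_two, Set.image_insert_eq]

variable {n d}

theorem quadricCurveMap_monomial (p : Fin 4 →₀ ℕ) :
    quadricCurveMap R n d (monomial p 1) =
      monomial (Finsupp.single 0 ((2 * n + d) * p 0 + (n + d) * p 1 + n * p 2) +
        Finsupp.single 1 (n * p 1 + (n + d) * p 2 + (2 * n + d) * p 3)) 1 := by
  rw [← mul_one (1 : R), ← monomial_mul, mul_one, ← X_pow_eq_monomial, ← X_pow_eq_monomial,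
    quadricCurveMap, aeval_monomial, Finsupp.prod_fintype _ _ fun _ ↦ pow_zero _]
  simp only [map_one, one_mul, Fin.prod_univ_four, Matrix.cons_val]
  ring

theorem span_quadricCurveGenerators_le_ker :
    Ideal.span (quadricCurveGenerators R n d) ≤ RingHom.ker (quadricCurveMap R n d) := by
  rw [Ideal.span_le]
  rintro _ (rfl | ⟨⟨i, j⟩, hij, rfl⟩)
  · simp only [quadricCurveMap, SetLike.mem_coe, RingHom.mem_ker, map_sub, map_mul, aeval_X,
      Matrix.cons_val]
    ring
  · obtain rfl : i + j = d := by simpa using hij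
    simp only [quadricCurveMap, SetLike.mem_coe, RingHom.mem_ker, map_sub, map_mul, map_pow,
      aeval_X, Matrix.cons_val]
    ring

theorem monomial_sub_monomial_mem_span_quadricCurveGenerators (hnd : n.Coprime d)
    {p q : Fin 4 →₀ ℕ}
    (hs : (2 * n + d) * p 0 + (n + d) * p 1 + n * p 2 =
      (2 * n + d) * q 0 + (n + d) * q 1 + n * q 2)
    (ht : n * p 1 + (n + d) * p 2 + (2 * n + d) * p 3 =
      n * q 1 + (n + d) * q 2 + (2 * n + d) * q 3) :
    monomial p 1 - monomial q 1 ∈ Ideal.span (quadricCurveGenerators R n d) := by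
  set I := Ideal.span (quadricCurveGenerators R n d)
  let x (i : Fin 4) : MvPolynomial (Fin 4) R ⧸ I := Ideal.Quotient.mk I (X i)
  have mk_monomial (p : Fin 4 →₀ ℕ) :
      Ideal.Quotient.mk I (monomial p 1) = ∏ i, x i ^ p i := by
    rw [monomial_eq, C_1, one_mul, Finsupp.prod_fintype _ _ fun _ ↦ pow_zero _]
    simp only [map_prod, map_pow, x]
  have hx : x 0 * x 3 = x 1 * x 2 := by
    simp only [x, ← map_mul]
    exact Ideal.Quotient.eq.mpr <| Ideal.subset_span <| Set.mem_insert _ _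
  have hrel (i j : ℕ) (hij : i + j = d) :
      x 0 ^ i * x 2 ^ (n + j) = x 1 ^ (n + i) * x 3 ^ j := by
    simp only [x, ← map_mul, ← map_pow]
    exact Ideal.Quotient.eq.mpr <| Ideal.subset_span <|
      Set.mem_insert_of_mem _ ⟨(i, j), by simpa using hij, rfl⟩
  rw [← Ideal.Quotient.eq, mk_monomial, mk_monomial]
  exact prod_pow_eq_of_weight_eq hnd hx hrel hs ht

theorem stmt_7_general (hnd : n.Coprime d) :
    RingHom.ker (quadricCurveMap R n d) = Ideal.span (quadricCurveGenerators R n d) := by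
  refine le_antisymm ?_ (span_quadricCurveGenerators_le_ker R)
  rw [ker_eq_span_binomials _ _ (quadricCurveMap_monomial R), Ideal.span_le]
  rintro _ ⟨p, q, hpq, rfl⟩
  exact monomial_sub_monomial_mem_span_quadricCurveGenerators R hnd
    (by simpa using DFunLike.congr_fun hpq 0) (by simpa using DFunLike.congr_fun hpq 1)

end Curve

/-- Remark `rat2`, even case: for `a ≥ 2` even, the kernel of the `k`-algebra
map `k[x₀,x₁,x₂,x₃] → k[s,t]`, `x₀ ↦ s^(2a)`, `x₁ ↦ s^(a+1)t^(a-1)`,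
`x₂ ↦ s^(a-1)t^(a+1)`, `x₃ ↦ t^(2a)` is generated by
`x₀x₃ - x₁x₂`, `x₀²x₂^(a-1) - x₁^(a+1)`, `x₀x₂^a - x₁^a x₃`,
`x₂^(a+1) - x₁^(a-1) x₃²`. -/
theorem stmt_7 (k : Type*) [Field k] (a : ℕ) (ha : 2 ≤ a) (hae : Even a) :
    RingHom.ker (aeval (R := k) (fun i : Fin 4 =>
      ![(X 0 : MvPolynomial (Fin 2) k) ^ (2 * a),
        X 0 ^ (a + 1) * X 1 ^ (a - 1),
        X 0 ^ (a - 1) * X 1 ^ (a + 1),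
        X 1 ^ (2 * a)] i)) =
    Ideal.span ({X 0 * X 3 - X 1 * X 2,
      (X 0 : MvPolynomial (Fin 4) k) ^ 2 * X 2 ^ (a - 1) - X 1 ^ (a + 1),
      X 0 * X 2 ^ a - X 1 ^ a * X 3,
      X 2 ^ (a + 1) - X 1 ^ (a - 1) * X 3 ^ 2} : Set (MvPolynomial (Fin 4) k)) := by
  obtain ⟨n, rfl⟩ : ∃ n, a = n + 1 := ⟨a - 1, by omega⟩
  have hn : n.Coprime 2 := Nat.coprime_two_right.mpr (by simpa [Nat.even_add_one] using hae)
  exact quadricCurveGenerators_two k n ▸ stmt_7_general k hn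
end
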